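/- Mutual information upper bound at very low SNR: there exists a constant C > 0 such that for all L ≥ 2 and all σ² > 2, the single-sample mutual information in the MRA model satisfies I(X; Y) ≤ log( 1 + L^{−1}·e^{L/σ²} ) + C·L/σ⁴. In particular, if σ² = L/(α log L) with 0 < α < 1 fixed, then limsup_{L→∞} I(X; Y)/L^{α−1} ≤ 1 (so I(X; Y) → 0 as L → ∞). -/

import Mathlib

open MeasureTheory ProbabilityTheory Filter
open scoped ENNReal

namespace MRAformal

/-- Standard Gaussian measure `N(0, I_L)` on `ℝ^L`. -/
noncomputable def stdGaussian (L : ℕ) : Measure (Fin L → ℝ) :=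
  Measure.pi fun _ => gaussianReal 0 1

/-- Uniform distribution on `{0, …, L-1}`. -/
noncomputable def unifFin (L : ℕ) : Measure (Fin L) :=
  ((L : ℝ≥0∞))⁻¹ • Measure.count

/-- Alignment distortion `ρ(x, x̂) = L⁻¹ min_ℓ ‖x - R_ℓ x̂‖²`,
where `(R_ℓ x̂)_j = x̂_{j+ℓ mod L}`. -/
noncomputable def rho (L : ℕ) (x xh : Fin L → ℝ) : ℝ :=
  (L : ℝ)⁻¹ * ⨅ ℓ : Fin L, ∑ j, (x j - xh (j + ℓ)) ^ 2

/-- Base probability space for the MRA model with `n` samples: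
the signal `X`, the i.i.d. uniform shifts `ℓ_i`, and the i.i.d. Gaussian noises `Z_i`. -/
noncomputable def mraBase (L n : ℕ) :
    Measure ((Fin L → ℝ) × (Fin n → Fin L) × (Fin n → Fin L → ℝ)) :=
  (stdGaussian L).prod ((Measure.pi fun _ => unifFin L).prod (Measure.pi fun _ => stdGaussian L))

/-- The measurements `Y_i = R_{ℓ_i} X + σ Z_i`. -/
def mraY (L n : ℕ) (σ : ℝ) (ω : (Fin L → ℝ) × (Fin n → Fin L) × (Fin n → Fin L → ℝ)) :
    Fin n → Fin L → ℝ :=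
  fun i j => ω.1 (j + ω.2.1 i) + σ * ω.2.2 i j

/-- `MSE*_MRA(L, σ², n)`: the infimum over measurable estimators `X̂(Y_1,…,Y_n)` of `E ρ(X, X̂)`.
Here `σ` is the noise standard deviation. -/
noncomputable def MSEstarMRA (L n : ℕ) (σ : ℝ) : ℝ :=
  sInf { e : ℝ | ∃ f : (Fin n → Fin L → ℝ) → (Fin L → ℝ), Measurable f ∧
    e = ∫ ω, rho L ω.1 (f (mraY L n σ ω)) ∂(mraBase L n) }

/-- `n*_MRA(L, σ², ε) = min {n : MSE*_MRA(L, σ², n) ≤ ε}`. -/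
noncomputable def nstarMRA (L : ℕ) (σ ε : ℝ) : ℕ :=
  sInf { n : ℕ | MSEstarMRA L n σ ≤ ε }

/-- Noise level such that `σ²(α) = L / (α log L)`. -/
noncomputable def sigmaAlpha (L : ℕ) (α : ℝ) : ℝ :=
  Real.sqrt ((L : ℝ) / (α * Real.log L))

/-- `n*_MRA(L, α, ε) := n*_MRA(L, σ²(α), ε)`. -/
noncomputable def nstarMRAa (L : ℕ) (α ε : ℝ) : ℕ :=
  nstarMRA L (sigmaAlpha L α) ε

/-- Mutual information `I(U; V)`: the Kullback–Leibler divergence of the joint law with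
respect to the product of its marginals (natural logarithm), expressed as the integral of
the log of the Radon–Nikodym derivative. -/
noncomputable def mutualInfo {α β : Type*} [MeasurableSpace α] [MeasurableSpace β]
    (μ : Measure (α × β)) : ℝ :=
  ∫ p, Real.log ((μ.rnDeriv ((μ.map Prod.fst).prod (μ.map Prod.snd))) p).toReal ∂μ

/-- Joint law of `(X, (Y_1,…,Y_n))` in the MRA model. -/
noncomputable def mraJoint (L n : ℕ) (σ : ℝ) :
    Measure ((Fin L → ℝ) × (Fin n → Fin L → ℝ)) :=
  (mraBase L n).map fun ω => (ω.1, mraY L n σ ω)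

/-- Joint law of `(X, Y)` for a single MRA measurement `Y = R_ℓ X + σ Z`. -/
noncomputable def mraJoint1 (L : ℕ) (σ : ℝ) : Measure ((Fin L → ℝ) × (Fin L → ℝ)) :=
  ((stdGaussian L).prod ((unifFin L).prod (stdGaussian L))).map
    fun ω => (ω.1, fun j => ω.1 (j + ω.2.1) + σ * ω.2.2 j)

/-!
Let `H` be the density of the joint law of `(X, Y)` with respect to the product of its marginals.
Jensen's inequality gives `I(X; Y) ≤ log ∫ H²`, the integral being taken against that product.
As `H` is an average over shifts of Gaussian likelihood ratios, `∫ H²` is an average over pairs of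
shifts, and each pair integral equals `|det (1 - t P)|⁻¹`, where `P` is the permutation matrix of
the relative shift and `t = 1 / (1 + σ²)`. The eigenvalues of `t P` have modulus at most `t` and
sum to `t * #fix`, `#fix` being the number of fixed points of the relative shift, so taking
logarithms eigenvalue by eigenvalue bounds the pair integral by
`exp (t * #fix + L t² / (2 (1 - t)))`. A nontrivial shift fixes nothing, and a fraction `L⁻¹` of
the pairs consists of equal shifts, for which `#fix = L`; these produce the term `L⁻¹ e^{L/σ²}`.
-/

open scoped NNReal

section Determinant

variable {n : Type*} [Fintype n] [DecidableEq n]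

theorem exp_neg_re_sub_le_norm_one_sub {z : ℂ} {r : ℝ} (hz : ‖z‖ ≤ r) (hr : r < 1) :
    Real.exp (-z.re - r ^ 2 * (1 - r)⁻¹ / 2) ≤ ‖1 - z‖ := by
  have hz1 : ‖z‖ < 1 := hz.trans_lt hr
  have hne : 1 - z ≠ 0 := sub_ne_zero.2 fun h => by simp [← h] at hz1
  have hlog : ‖Complex.log (1 - z) + z‖ ≤ r ^ 2 * (1 - r)⁻¹ / 2 := by
    have h := Complex.norm_log_one_add_sub_self_le (z := -z) (by rwa [norm_neg])
    rw [← sub_eq_add_neg, sub_neg_eq_add, norm_neg] at h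
    have : 0 < 1 - r := sub_pos.2 hr
    exact h.trans (by gcongr)
  have hre := (abs_le.1 ((Complex.abs_re_le_norm _).trans hlog)).1
  rw [Complex.add_re, Complex.log_re] at hre
  rw [← Real.le_log_iff_exp_le (norm_pos_iff.2 hne)]
  linarith

theorem exp_neg_re_sum_sub_le_norm_prod_one_sub {r : ℝ} (hr : r < 1) (m : Multiset ℂ)
    (hm : ∀ z ∈ m, ‖z‖ ≤ r) :
    Real.exp (-m.sum.re - m.card * (r ^ 2 * (1 - r)⁻¹ / 2)) ≤ ‖(m.map (1 - ·)).prod‖ := by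
  induction m using Multiset.induction_on with
  | empty => simp
  | cons z m ih =>
    have hz := exp_neg_re_sub_le_norm_one_sub (hm z (Multiset.mem_cons_self z m)) hr
    have hrest := ih fun w hw => hm w (Multiset.mem_cons_of_mem hw)
    calc
      _ = Real.exp (-z.re - r ^ 2 * (1 - r)⁻¹ / 2) *
          Real.exp (-m.sum.re - m.card * (r ^ 2 * (1 - r)⁻¹ / 2)) := by
        rw [← Real.exp_add, Multiset.sum_cons, Multiset.card_cons, Complex.add_re]
        push_cast
        ring_nf
      _ ≤ ‖1 - z‖ * ‖(m.map (1 - ·)).prod‖ := by gcongr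
      _ = _ := by rw [Multiset.map_cons, Multiset.prod_cons, norm_mul]

theorem exp_neg_re_trace_sub_le_norm_det_one_sub (A : Matrix n n ℂ) {r : ℝ} (hr : r < 1)
    (hA : ∀ z ∈ spectrum ℂ A, ‖z‖ ≤ r) :
    Real.exp (-A.trace.re - Fintype.card n * (r ^ 2 * (1 - r)⁻¹ / 2)) ≤ ‖(1 - A).det‖ := by
  have hsplits : A.charpoly.Splits := IsAlgClosed.splits A.charpoly
  have hcard : A.charpoly.roots.card = Fintype.card n := by
    rw [← hsplits.natDegree_eq_card_roots, Matrix.charpoly_natDegree_eq_dim]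
  have hdet : (1 - A).det = (A.charpoly.roots.map (1 - ·)).prod := by
    conv_lhs => rw [← map_one (Matrix.scalar n), ← Matrix.eval_charpoly,
      hsplits.eq_prod_roots_of_monic A.charpoly_monic]
    simp [Polynomial.eval_multiset_prod]
  rw [hdet, A.trace_eq_sum_roots_charpoly, ← hcard]
  refine exp_neg_re_sum_sub_le_norm_prod_one_sub hr _ fun z hz => hA z ?_
  exact Matrix.mem_spectrum_iff_isRoot_charpoly.2 (Polynomial.isRoot_of_mem_roots hz)

open scoped Matrix.Norms.L2Operator in
theorem norm_le_of_mem_spectrum_smul_permMatrix (π : Equiv.Perm n) {t : ℝ} (ht : 0 ≤ t) {z : ℂ}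
    (hz : z ∈ spectrum ℂ ((t : ℂ) • π.permMatrix ℂ)) : ‖z‖ ≤ t := by
  have hone : ‖(1 : Matrix n n ℂ)‖ ≤ 1 := by
    simpa only [Matrix.permMatrix_one] using
      Matrix.permMatrix_l2_opNorm_le (𝕜 := ℂ) (1 : Equiv.Perm n)
  calc
    ‖z‖ ≤ ‖(t : ℂ) • π.permMatrix ℂ‖ * ‖(1 : Matrix n n ℂ)‖ :=
      spectrum.norm_le_norm_mul_of_mem hz
    _ ≤ ‖(t : ℂ) • π.permMatrix ℂ‖ := mul_le_of_le_one_right (norm_nonneg _) hone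
    _ = t * ‖π.permMatrix ℂ‖ := by rw [norm_smul, Complex.norm_of_nonneg ht]
    _ ≤ t := mul_le_of_le_one_right ht (Matrix.permMatrix_l2_opNorm_le π)

theorem exp_neg_le_abs_det_one_sub_smul_permMatrix (π : Equiv.Perm n) {t : ℝ} (ht : 0 ≤ t)
    (ht1 : t < 1) :
    Real.exp (-(t * (Function.fixedPoints π).ncard)
      - Fintype.card n * (t ^ 2 * (1 - t)⁻¹ / 2)) ≤ |(1 - t • π.permMatrix ℝ).det| := by
  have hmap : Complex.ofRealHom.mapMatrix (1 - t • π.permMatrix ℝ) =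
      1 - (t : ℂ) • π.permMatrix ℂ := by
    have hP : Complex.ofRealHom.mapMatrix (π.permMatrix ℝ) = π.permMatrix ℂ :=
      PEquiv.map_toMatrix _ _
    rw [map_sub, map_one, ← hP]
    congr 1
    ext i j
    exact Complex.ofReal_mul _ _
  have h := exp_neg_re_trace_sub_le_norm_det_one_sub ((t : ℂ) • π.permMatrix ℂ) ht1
    fun z hz => norm_le_of_mem_spectrum_smul_permMatrix π ht hz
  rwa [← hmap, ← RingHom.map_det, Complex.ofRealHom_eq_coe, Complex.norm_real, Real.norm_eq_abs,
    Matrix.trace_smul, Matrix.trace_permutation, smul_eq_mul, Complex.re_ofReal_mul,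
    Complex.natCast_re] at h

end Determinant

section Information

variable {α β : Type*} [MeasurableSpace α] [MeasurableSpace β]

theorem integrable_llr_of_lintegral_rnDeriv_ne_top {μ ν : Measure α} [IsFiniteMeasure μ]
    [IsFiniteMeasure ν] (hμν : μ ≪ ν) (h : ∫⁻ x, μ.rnDeriv ν x ∂μ ≠ ∞) :
    Integrable (llr μ ν) μ := by
  have hr : Integrable (fun x => (μ.rnDeriv ν x).toReal) μ :=
    integrable_toReal_of_lintegral_ne_top (Measure.measurable_rnDeriv μ ν).aemeasurable h
  have hsq : Integrable (fun x => (μ.rnDeriv ν x).toReal * (μ.rnDeriv ν x).toReal) ν :=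
    (integrable_rnDeriv_smul_iff hμν).2 hr
  rw [← InformationTheory.integrable_klFun_rnDeriv_iff hμν]
  have hkl : Measurable fun x => InformationTheory.klFun (μ.rnDeriv ν x).toReal :=
    InformationTheory.measurable_klFun.comp (Measure.measurable_rnDeriv μ ν).ennreal_toReal
  refine (hsq.add (integrable_const 1)).mono' hkl.aestronglyMeasurable (ae_of_all _ fun x => ?_)
  have hx : 0 ≤ (μ.rnDeriv ν x).toReal := ENNReal.toReal_nonneg
  rw [Real.norm_of_nonneg (InformationTheory.klFun_nonneg hx), InformationTheory.klFun,
    Pi.add_apply]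
  nlinarith [mul_le_mul_of_nonneg_left (Real.log_le_self hx) hx]

theorem ofReal_exp_integral_llr_le_lintegral_rnDeriv {μ ν : Measure α} [IsProbabilityMeasure μ]
    [IsFiniteMeasure ν] (hμν : μ ≪ ν) :
    ENNReal.ofReal (Real.exp (∫ x, llr μ ν x ∂μ)) ≤ ∫⁻ x, μ.rnDeriv ν x ∂μ := by
  by_cases h : ∫⁻ x, μ.rnDeriv ν x ∂μ = ∞
  · exact h ▸ le_top
  have hexp := exp_llr_of_ac μ ν hμν
  have hr : Integrable (fun x => (μ.rnDeriv ν x).toReal) μ :=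
    integrable_toReal_of_lintegral_ne_top (Measure.measurable_rnDeriv μ ν).aemeasurable h
  refine ENNReal.ofReal_le_of_le_toReal ?_
  calc
    _ ≤ ∫ x, Real.exp (llr μ ν x) ∂μ :=
      convexOn_exp.map_integral_le Real.continuous_exp.continuousOn isClosed_univ (by simp)
        (integrable_llr_of_lintegral_rnDeriv_ne_top hμν h) (hr.congr hexp.symm)
    _ = ∫ x, (μ.rnDeriv ν x).toReal ∂μ := integral_congr_ae hexp
    _ = _ := integral_toReal (Measure.measurable_rnDeriv μ ν).aemeasurable
      (hμν (Measure.rnDeriv_lt_top μ ν))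

theorem map_fst_withDensity_prod (μ : Measure α) (ν : Measure β) [SFinite μ] [SFinite ν]
    {f : α × β → ℝ≥0∞} (hf : Measurable f) :
    ((μ.prod ν).withDensity f).map Prod.fst = μ.withDensity fun x => ∫⁻ y, f (x, y) ∂ν := by
  refine Measure.ext fun s hs => ?_
  rw [Measure.map_apply measurable_fst hs, withDensity_apply _ (measurable_fst hs),
    withDensity_apply _ hs, ← Set.prod_univ, setLIntegral_prod _ hf.aemeasurable]
  simp only [Measure.restrict_univ]

theorem map_snd_withDensity_prod (μ : Measure α) (ν : Measure β) [SFinite μ] [SFinite ν]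
    {f : α × β → ℝ≥0∞} (hf : Measurable f) :
    ((μ.prod ν).withDensity f).map Prod.snd = ν.withDensity fun y => ∫⁻ x, f (x, y) ∂μ := by
  refine Measure.ext fun s hs => ?_
  rw [Measure.map_apply measurable_snd hs, withDensity_apply _ (measurable_snd hs),
    withDensity_apply _ hs, ← Set.univ_prod, setLIntegral_prod_symm _ hf.aemeasurable]
  simp only [Measure.restrict_univ]

theorem map_prodMk_prod_eq_withDensity {γ : Type*} [MeasurableSpace γ] {μ : Measure α}
    {κ : Measure γ} {ν : Measure β} [SFinite μ] [SFinite κ] [SFinite ν]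
    {g : α × γ → β} (hg : Measurable g) {f : α × β → ℝ≥0∞} (hf : Measurable f)
    (h : ∀ x, κ.map (fun z => g (x, z)) = ν.withDensity fun y => f (x, y)) :
    (μ.prod κ).map (fun p => (p.1, g p)) = (μ.prod ν).withDensity f := by
  have hpair : Measurable fun p : α × γ => (p.1, g p) := by fun_prop
  refine Measure.ext fun s hs => ?_
  rw [Measure.map_apply hpair hs, Measure.prod_apply (hpair hs), withDensity_apply _ hs,
    ← lintegral_indicator hs, lintegral_prod _ (hf.indicator hs).aemeasurable]
  refine lintegral_congr fun x => ?_
  have hx : MeasurableSet (Prod.mk x ⁻¹' s) := measurable_prodMk_left hs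
  calc
    _ = κ.map (fun z => g (x, z)) (Prod.mk x ⁻¹' s) := by
      rw [Measure.map_apply (by fun_prop) hx]
      rfl
    _ = ∫⁻ y in Prod.mk x ⁻¹' s, f (x, y) ∂ν := by rw [h, withDensity_apply _ hx]
    _ = _ := by
      rw [← lintegral_indicator hx]
      rfl

theorem map_prod_eq_withDensity_lintegral {Θ γ : Type*} [MeasurableSpace Θ] [MeasurableSpace γ]
    {ρ : Measure Θ} {κ : Measure γ} {ν : Measure β} [SFinite ρ] [SFinite κ] [SFinite ν]
    {g : Θ × γ → β} (hg : Measurable g) {f : Θ × β → ℝ≥0∞} (hf : Measurable f)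
    (h : ∀ θ, κ.map (fun z => g (θ, z)) = ν.withDensity fun y => f (θ, y)) :
    (ρ.prod κ).map g = ν.withDensity fun y => ∫⁻ θ, f (θ, y) ∂ρ := by
  rw [← map_snd_withDensity_prod ρ ν hf, ← map_prodMk_prod_eq_withDensity hg hf h,
    Measure.map_map measurable_snd (by fun_prop)]
  rfl

theorem lintegral_lintegral_mul_lintegral {Θ : Type*} [MeasurableSpace Θ] (ρ : Measure Θ)
    [SFinite ρ] (ν : Measure α) [SFinite ν] {h : Θ × α → ℝ≥0∞} (hh : Measurable h) :
    ∫⁻ x, (∫⁻ θ, h (θ, x) ∂ρ) * ∫⁻ θ, h (θ, x) ∂ρ ∂ν =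
      ∫⁻ θ, ∫⁻ θ', ∫⁻ x, h (θ, x) * h (θ', x) ∂ν ∂ρ ∂ρ := by
  have : Measurable fun x => ∫⁻ θ, h (θ, x) ∂ρ := hh.lintegral_prod_left'
  calc
    _ = ∫⁻ x, ∫⁻ θ, h (θ, x) * ∫⁻ θ', h (θ', x) ∂ρ ∂ρ ∂ν := by
      refine lintegral_congr fun x => ?_
      rw [lintegral_mul_const _ (by fun_prop)]
    _ = ∫⁻ θ, ∫⁻ x, h (θ, x) * ∫⁻ θ', h (θ', x) ∂ρ ∂ν ∂ρ :=
      lintegral_lintegral_swap (by fun_prop)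
    _ = ∫⁻ θ, ∫⁻ x, ∫⁻ θ', h (θ, x) * h (θ', x) ∂ρ ∂ν ∂ρ := by
      refine lintegral_congr fun θ => lintegral_congr fun x => ?_
      rw [lintegral_const_mul _ (by fun_prop)]
    _ = _ := lintegral_congr fun θ => lintegral_lintegral_swap (by fun_prop)

section MutualInfo

variable {γ : Measure α} {γ' : Measure β} [IsProbabilityMeasure γ] [IsProbabilityMeasure γ']
  {H : α × β → ℝ≥0∞}

theorem isProbabilityMeasure_withDensity_prod (hH : Measurable H)
    (hfst : ∀ x, ∫⁻ y, H (x, y) ∂γ' = 1) :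
    IsProbabilityMeasure ((γ.prod γ').withDensity H) := by
  constructor
  rw [withDensity_apply _ .univ, setLIntegral_univ, lintegral_prod _ hH.aemeasurable]
  simp only [hfst, lintegral_const, measure_univ, mul_one]

theorem mutualInfo_withDensity_prod (hH : Measurable H) (hfst : ∀ x, ∫⁻ y, H (x, y) ∂γ' = 1)
    (hsnd : ∀ y, ∫⁻ x, H (x, y) ∂γ = 1) :
    mutualInfo ((γ.prod γ').withDensity H) =
      ∫ p, llr ((γ.prod γ').withDensity H) (γ.prod γ') p ∂(γ.prod γ').withDensity H := by
  have hfst' : ((γ.prod γ').withDensity H).map Prod.fst = γ := by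
    rw [map_fst_withDensity_prod γ γ' hH, funext hfst]
    exact withDensity_one
  have hsnd' : ((γ.prod γ').withDensity H).map Prod.snd = γ' := by
    rw [map_snd_withDensity_prod γ γ' hH, funext hsnd]
    exact withDensity_one
  rw [mutualInfo, hfst', hsnd']
  rfl

theorem mutualInfo_withDensity_prod_nonneg (hH : Measurable H)
    (hfst : ∀ x, ∫⁻ y, H (x, y) ∂γ' = 1) (hsnd : ∀ y, ∫⁻ x, H (x, y) ∂γ = 1) :
    0 ≤ mutualInfo ((γ.prod γ').withDensity H) := by
  have := isProbabilityMeasure_withDensity_prod (γ := γ) hH hfst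
  rw [mutualInfo_withDensity_prod hH hfst hsnd, ← InformationTheory.toReal_klDiv_of_measure_eq
    (withDensity_absolutelyContinuous _ _) (by rw [measure_univ, measure_univ])]
  exact ENNReal.toReal_nonneg

theorem ofReal_exp_mutualInfo_withDensity_prod_le (hH : Measurable H)
    (hfst : ∀ x, ∫⁻ y, H (x, y) ∂γ' = 1) (hsnd : ∀ y, ∫⁻ x, H (x, y) ∂γ = 1) :
    ENNReal.ofReal (Real.exp (mutualInfo ((γ.prod γ').withDensity H))) ≤
      ∫⁻ p, H p * H p ∂γ.prod γ' := by
  have := isProbabilityMeasure_withDensity_prod (γ := γ) hH hfst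
  have hac := withDensity_absolutelyContinuous (γ.prod γ') H
  calc
    _ ≤ ∫⁻ p, ((γ.prod γ').withDensity H).rnDeriv (γ.prod γ') p ∂(γ.prod γ').withDensity H := by
      rw [mutualInfo_withDensity_prod hH hfst hsnd]
      exact ofReal_exp_integral_llr_le_lintegral_rnDeriv hac
    _ = ∫⁻ p, H p ∂(γ.prod γ').withDensity H :=
      lintegral_congr_ae (hac.ae_le (Measure.rnDeriv_withDensity _ hH))
    _ = _ := lintegral_withDensity_eq_lintegral_mul _ hH hH

end MutualInfo

end Information

section ProductDensity

theorem lintegral_pi_fin_prod {n : ℕ} {E : Fin n → Type*} [∀ i, MeasurableSpace (E i)]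
    (μ : ∀ i, Measure (E i)) [∀ i, SigmaFinite (μ i)] {f : ∀ i, E i → ℝ≥0∞}
    (hf : ∀ i, Measurable (f i)) :
    ∫⁻ x, ∏ i, f i (x i) ∂Measure.pi μ = ∏ i, ∫⁻ x, f i x ∂μ i := by
  induction n with
  | zero => simp
  | succ n ih =>
    have hrest : Measurable fun x : ∀ i : Fin n, E i.succ => ∏ i, f i.succ (x i) := by fun_prop
    calc
      _ = ∫⁻ x : E 0 × ((i : Fin n) → E i.succ), f 0 x.1 * ∏ i, f i.succ (x.2 i)
            ∂(μ 0).prod (Measure.pi fun i => μ i.succ) := by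
        rw [← (measurePreserving_piFinSuccAbove μ 0).symm.lintegral_comp_emb
          (MeasurableEquiv.measurableEmbedding _)]
        refine lintegral_congr fun x => ?_
        rw [Fin.prod_univ_succ]
        rfl
      _ = _ := by
        rw [lintegral_prod_mul (hf 0).aemeasurable hrest.aemeasurable,
          ih (fun i => μ i.succ) fun i => hf i.succ, Fin.prod_univ_succ]

variable {ι : Type*} [Fintype ι] {E : ι → Type*} [∀ i, MeasurableSpace (E i)]

theorem lintegral_pi_prod (μ : ∀ i, Measure (E i)) [∀ i, SigmaFinite (μ i)]
    {f : ∀ i, E i → ℝ≥0∞} (hf : ∀ i, Measurable (f i)) :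
    ∫⁻ x, ∏ i, f i (x i) ∂Measure.pi μ = ∏ i, ∫⁻ x, f i x ∂μ i := by
  let e := (Fintype.equivFin ι).symm
  rw [← (measurePreserving_piCongrLeft μ e).lintegral_comp_emb
    (MeasurableEquiv.measurableEmbedding _)]
  simp_rw [← e.prod_comp, MeasurableEquiv.coe_piCongrLeft, Equiv.piCongrLeft_apply_apply]
  exact lintegral_pi_fin_prod (fun i => μ (e i)) fun i => hf (e i)

theorem pi_withDensity (μ : ∀ i, Measure (E i)) [∀ i, SigmaFinite (μ i)]
    {f : ∀ i, E i → ℝ≥0∞} (hf : ∀ i, Measurable (f i))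
    [∀ i, SigmaFinite ((μ i).withDensity (f i))] :
    Measure.pi (fun i => (μ i).withDensity (f i)) =
      (Measure.pi μ).withDensity fun x => ∏ i, f i (x i) := by
  classical
  refine Measure.pi_eq fun s hs => ?_
  have hprod (x : ∀ i, E i) : (Set.univ.pi s).indicator (fun x => ∏ i, f i (x i)) x =
      ∏ i, (s i).indicator (f i) (x i) := by
    simp only [Set.indicator_apply, Set.mem_univ_pi, Finset.prod_ite_zero, Finset.mem_univ,
      forall_const]
  rw [withDensity_apply _ (.univ_pi hs), ← lintegral_indicator (.univ_pi hs)]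
  simp_rw [hprod, lintegral_pi_prod μ fun i => (hf i).indicator (hs i), lintegral_indicator (hs _),
    withDensity_apply _ (hs _)]

end ProductDensity

section Gaussian

theorem gaussianPDFReal_mul_gaussianPDFReal (m : ℝ) {v s : ℝ≥0} (hv : v ≠ 0) (hs : s ≠ 0)
    (a y : ℝ) :
    gaussianPDFReal m v a * gaussianPDFReal a s y =
      gaussianPDFReal m (v + s) y *
        gaussianPDFReal (m + (v / (v + s)) * (y - m)) (v * s / (v + s)) a := by
  have : (0 : ℝ) < v := by positivity
  have : (0 : ℝ) < s := by positivity
  have hmul (p q x y : ℝ) :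
      p * Real.exp x * (q * Real.exp y) = p * q * Real.exp (x + y) := by
    rw [Real.exp_add]; ring
  simp only [gaussianPDFReal, NNReal.coe_add, NNReal.coe_div, NNReal.coe_mul, hmul]
  rw [← mul_inv, ← mul_inv, ← Real.sqrt_mul (by positivity), ← Real.sqrt_mul (by positivity)]
  congr 2
  · congr 1
    field_simp
  · field_simp
    ring

theorem gaussianPDF_mul_gaussianPDF (m : ℝ) {v s : ℝ≥0} (hv : v ≠ 0) (hs : s ≠ 0) (a y : ℝ) :
    gaussianPDF m v a * gaussianPDF a s y =
      gaussianPDF m (v + s) y *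
        gaussianPDF (m + (v / (v + s)) * (y - m)) (v * s / (v + s)) a := by
  simp only [gaussianPDF]
  rw [← ENNReal.ofReal_mul (gaussianPDFReal_nonneg _ _ _),
    ← ENNReal.ofReal_mul (gaussianPDFReal_nonneg _ _ _),
    gaussianPDFReal_mul_gaussianPDFReal m hv hs]

theorem gaussianReal_map_const_add_const_mul (μ : ℝ) (v : ℝ≥0) (m c : ℝ) :
    (gaussianReal μ v).map (fun z => m + c * z) =
      gaussianReal (m + c * μ) (.mk (c ^ 2) (sq_nonneg c) * v) := by
  have hcomp : (fun z => m + c * z) = (m + ·) ∘ (c * ·) := rfl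
  rw [hcomp, ← Measure.map_map (by fun_prop) (by fun_prop), gaussianReal_map_const_mul,
    gaussianReal_map_const_add, add_comm m]

variable {ι : Type*} [Fintype ι]

/-- The Gaussian measure `N(m, v I)` on `ι → ℝ`. -/
noncomputable def gaussianPi (m : ι → ℝ) (v : ℝ≥0) : Measure (ι → ℝ) :=
  Measure.pi fun i => gaussianReal (m i) v

/-- The Lebesgue density of `gaussianPi m v`, for `v ≠ 0`. -/
noncomputable def gaussianPiPDF (m : ι → ℝ) (v : ℝ≥0) (x : ι → ℝ) : ℝ≥0∞ :=
  ∏ i, gaussianPDF (m i) v (x i)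

instance (m : ι → ℝ) (v : ℝ≥0) : IsProbabilityMeasure (gaussianPi m v) := by
  unfold gaussianPi
  infer_instance

@[fun_prop]
theorem measurable_gaussianPiPDF (v : ℝ≥0) :
    Measurable fun p : (ι → ℝ) × (ι → ℝ) => gaussianPiPDF p.1 v p.2 := by
  unfold gaussianPiPDF gaussianPDF gaussianPDFReal
  fun_prop

theorem gaussianPiPDF_ne_zero (m : ι → ℝ) {v : ℝ≥0} (hv : v ≠ 0) (x : ι → ℝ) :
    gaussianPiPDF m v x ≠ 0 :=
  Finset.prod_ne_zero_iff.2 fun i _ => (gaussianPDF_pos (m i) hv (x i)).ne'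

theorem gaussianPiPDF_ne_top (m : ι → ℝ) (v : ℝ≥0) (x : ι → ℝ) : gaussianPiPDF m v x ≠ ∞ :=
  ENNReal.prod_ne_top fun _ _ => ENNReal.ofReal_ne_top

theorem gaussianPi_eq_withDensity (m : ι → ℝ) {v : ℝ≥0} (hv : v ≠ 0) :
    gaussianPi m v = volume.withDensity (gaussianPiPDF m v) := by
  have hreal (i : ι) := gaussianReal_of_var_ne_zero (m i) hv
  have (i : ι) : SigmaFinite (volume.withDensity (gaussianPDF (m i) v)) := by
    rw [← hreal]
    infer_instance
  simp only [gaussianPi, hreal]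
  exact pi_withDensity (fun _ => volume) fun i => measurable_gaussianPDF (m i) v

theorem lintegral_gaussianPiPDF (m : ι → ℝ) {v : ℝ≥0} (hv : v ≠ 0) :
    ∫⁻ x, gaussianPiPDF m v x = 1 := by
  rw [← setLIntegral_univ, ← withDensity_apply _ .univ, ← gaussianPi_eq_withDensity m hv,
    measure_univ]

theorem gaussianPiPDF_zero_sub (m : ι → ℝ) (v : ℝ≥0) (x : ι → ℝ) :
    gaussianPiPDF 0 v (x - m) = gaussianPiPDF m v x := by
  simp only [gaussianPiPDF, gaussianPDF, gaussianPDFReal, Pi.sub_apply, Pi.zero_apply, sub_zero]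

theorem gaussianPiPDF_comp_equiv (m : ι → ℝ) (v : ℝ≥0) (π : Equiv.Perm ι) (x : ι → ℝ) :
    gaussianPiPDF (m ∘ π) v x = gaussianPiPDF m v (x ∘ π.symm) := by
  simp only [gaussianPiPDF, Function.comp_apply]
  rw [← Equiv.prod_comp π fun i => gaussianPDF (m i) v (x (π.symm i))]
  simp only [Equiv.symm_apply_apply]

theorem gaussianPiPDF_mul_gaussianPiPDF (m : ι → ℝ) {v s : ℝ≥0} (hv : v ≠ 0) (hs : s ≠ 0)
    (x y : ι → ℝ) :
    gaussianPiPDF m v x * gaussianPiPDF x s y =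
      gaussianPiPDF m (v + s) y *
        gaussianPiPDF (m + ((v : ℝ) / (v + s)) • (y - m)) (v * s / (v + s)) x := by
  simp only [gaussianPiPDF, ← Finset.prod_mul_distrib]
  exact Finset.prod_congr rfl fun i _ => gaussianPDF_mul_gaussianPDF (m i) hv hs (x i) (y i)

theorem gaussianPi_map_add_const_mul (μ : ι → ℝ) (v : ℝ≥0) (m : ι → ℝ) (c : ℝ) :
    (gaussianPi μ v).map (fun z i => m i + c * z i) =
      gaussianPi (m + c • μ) (.mk (c ^ 2) (sq_nonneg c) * v) := by
  unfold gaussianPi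
  rw [Measure.pi_map_pi (f := fun i z => m i + c * z) fun i => by fun_prop]
  simp only [gaussianReal_map_const_add_const_mul, Pi.add_apply, Pi.smul_apply, smul_eq_mul]

end Gaussian

section Coupled

variable {ι : Type*} [Fintype ι] [DecidableEq ι]

theorem lintegral_comp_mulVec {M : Matrix ι ι ℝ} (hM : M.det ≠ 0) {g : (ι → ℝ) → ℝ≥0∞}
    (hg : Measurable g) :
    ∫⁻ x, g (M.mulVec x) = ENNReal.ofReal |M.det|⁻¹ * ∫⁻ x, g x := by
  have hmap := Real.map_matrix_volume_pi_eq_smul_volume_pi hM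
  rw [← abs_inv, ← smul_eq_mul, ← lintegral_smul_measure, ← hmap,
    lintegral_map hg (by fun_prop)]
  rfl

theorem lintegral_sub_mulVec_mul_sub_mulVec {A B : Matrix ι ι ℝ} (hdet : (1 - B * A).det ≠ 0)
    {f g : (ι → ℝ) → ℝ≥0∞} (hf : Measurable f) (hg : Measurable g) :
    ∫⁻ p : (ι → ℝ) × (ι → ℝ), f (p.1 - A.mulVec p.2) * g (p.2 - B.mulVec p.1) =
      ENNReal.ofReal |(1 - B * A).det|⁻¹ * ((∫⁻ x, f x) * ∫⁻ y, g y) := by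
  have htranslate (y : ι → ℝ) : ∫⁻ x, f (x - A.mulVec y) * g (y - B.mulVec x) =
      ∫⁻ x, f x * g ((1 - B * A).mulVec y - B.mulVec x) := by
    rw [← lintegral_add_right_eq_self _ (A.mulVec y)]
    refine lintegral_congr fun x => ?_
    rw [add_sub_cancel_right, Matrix.mulVec_add, Matrix.sub_mulVec, Matrix.one_mulVec,
      ← Matrix.mulVec_mulVec]
    congr 2
    abel
  have hinner (x : ι → ℝ) : ∫⁻ y, f x * g ((1 - B * A).mulVec y - B.mulVec x) =
      f x * (ENNReal.ofReal |(1 - B * A).det|⁻¹ * ∫⁻ y, g y) := by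
    rw [lintegral_const_mul _ (by fun_prop),
      lintegral_comp_mulVec hdet (g := fun y => g (y - B.mulVec x)) (by fun_prop),
      lintegral_sub_right_eq_self g]
  calc
    _ = ∫⁻ y, ∫⁻ x, f (x - A.mulVec y) * g (y - B.mulVec x) :=
      lintegral_prod_symm _ (by fun_prop)
    _ = ∫⁻ x, ∫⁻ y, f x * g ((1 - B * A).mulVec y - B.mulVec x) := by
      simp_rw [htranslate]
      exact lintegral_lintegral_swap (by fun_prop)
    _ = _ := by
      simp_rw [hinner]
      rw [lintegral_mul_const _ hf, mul_left_comm]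

end Coupled

section LikelihoodRatio

variable {ι : Type*} [Fintype ι] {v s : ℝ≥0}

/-- The likelihood ratio of `N(m, s I)` with respect to `N(0, (v + s) I)`, which is the law of a
`N(0, v I)` signal observed in independent `N(0, s I)` noise. -/
noncomputable def gaussianLR (v s : ℝ≥0) (m y : ι → ℝ) : ℝ≥0∞ :=
  gaussianPiPDF m s y / gaussianPiPDF 0 (v + s) y

@[fun_prop]
theorem measurable_gaussianLR (v s : ℝ≥0) :
    Measurable fun p : (ι → ℝ) × (ι → ℝ) => gaussianLR v s p.1 p.2 := by
  unfold gaussianLR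
  fun_prop

theorem gaussianPiPDF_mul_gaussianLR (hs : s ≠ 0) (m y : ι → ℝ) :
    gaussianPiPDF 0 (v + s) y * gaussianLR v s m y = gaussianPiPDF m s y :=
  ENNReal.mul_div_cancel (gaussianPiPDF_ne_zero 0 (by positivity) y) (gaussianPiPDF_ne_top _ _ _)

theorem gaussianPi_withDensity_gaussianLR (hs : s ≠ 0) (m : ι → ℝ) :
    (gaussianPi 0 (v + s)).withDensity (gaussianLR v s m) = gaussianPi m s := by
  rw [gaussianPi_eq_withDensity 0 (by positivity), gaussianPi_eq_withDensity m hs,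
    ← withDensity_mul _ (by fun_prop) (by fun_prop)]
  exact congrArg _ (funext fun y => gaussianPiPDF_mul_gaussianLR hs m y)

theorem lintegral_gaussianLR_right (hs : s ≠ 0) (m : ι → ℝ) :
    ∫⁻ y, gaussianLR v s m y ∂gaussianPi 0 (v + s) = 1 := by
  rw [← setLIntegral_univ, ← withDensity_apply _ .univ, gaussianPi_withDensity_gaussianLR hs,
    measure_univ]

theorem gaussianPiPDF_mul_gaussianLR_comp (hv : v ≠ 0) (hs : s ≠ 0) (π : Equiv.Perm ι)
    (x y : ι → ℝ) :
    gaussianPiPDF 0 v x * gaussianLR v s (x ∘ π) y =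
      gaussianPiPDF (((v : ℝ) / (v + s)) • (y ∘ π.symm)) (v * s / (v + s)) x := calc
  _ = gaussianPiPDF 0 v (x ∘ π) * gaussianPiPDF (x ∘ π) s y / gaussianPiPDF 0 (v + s) y := by
    rw [← π.symm_symm, ← gaussianPiPDF_comp_equiv, gaussianLR, mul_div_assoc]
    rfl
  _ = gaussianPiPDF (((v : ℝ) / (v + s)) • y) (v * s / (v + s)) (x ∘ π) := by
    rw [gaussianPiPDF_mul_gaussianPiPDF 0 hv hs, zero_add, sub_zero, mul_comm]
    exact ENNReal.mul_div_cancel_right (gaussianPiPDF_ne_zero 0 (by positivity) y)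
      (gaussianPiPDF_ne_top _ _ _)
  _ = _ := (gaussianPiPDF_comp_equiv _ _ π.symm x).symm

theorem lintegral_gaussianLR_comp_left (hv : v ≠ 0) (hs : s ≠ 0) (π : Equiv.Perm ι) (y : ι → ℝ) :
    ∫⁻ x, gaussianLR v s (x ∘ π) y ∂gaussianPi 0 v = 1 := by
  rw [gaussianPi_eq_withDensity 0 hv,
    lintegral_withDensity_eq_lintegral_mul _ (by fun_prop) (by fun_prop)]
  simp only [Pi.mul_apply, gaussianPiPDF_mul_gaussianLR_comp hv hs]
  exact lintegral_gaussianPiPDF _ (by positivity)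

variable [DecidableEq ι]

-- Bayes' formula turns the integrand into `f (x - A y) * g (y - B x)` with `A`, `B` multiples of
-- permutation matrices, so that a single determinant remains.
theorem lintegral_gaussianLR_mul_gaussianLR (hv : v ≠ 0) (hs : s ≠ 0) (π π' : Equiv.Perm ι)
    (hdet : (1 - ((v : ℝ) / (v + s)) • (π⁻¹ * π').permMatrix ℝ).det ≠ 0) :
    ∫⁻ p, gaussianLR v s (p.1 ∘ π) p.2 * gaussianLR v s (p.1 ∘ π') p.2
        ∂(gaussianPi 0 v).prod (gaussianPi 0 (v + s)) =
      ENNReal.ofReal |(1 - ((v : ℝ) / (v + s)) • (π⁻¹ * π').permMatrix ℝ).det|⁻¹ := by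
  have hBA : π'.permMatrix ℝ * ((v : ℝ) / (v + s)) • π⁻¹.permMatrix ℝ =
      ((v : ℝ) / (v + s)) • (π⁻¹ * π').permMatrix ℝ := by
    rw [Matrix.mul_smul, Matrix.permMatrix_mul]
  rw [← hBA] at hdet ⊢
  calc
    _ = ∫⁻ p : (ι → ℝ) × (ι → ℝ), (gaussianPiPDF 0 v p.1 * gaussianLR v s (p.1 ∘ π) p.2) *
          (gaussianPiPDF 0 (v + s) p.2 * gaussianLR v s (p.1 ∘ π') p.2) := by
      rw [gaussianPi_eq_withDensity 0 hv, gaussianPi_eq_withDensity 0 (by positivity),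
        prod_withDensity (by fun_prop) (by fun_prop),
        lintegral_withDensity_eq_lintegral_mul _ (by fun_prop) (by fun_prop)]
      simp only [Pi.mul_apply, mul_mul_mul_comm]
      rfl
    _ = ∫⁻ p : (ι → ℝ) × (ι → ℝ), gaussianPiPDF 0 (v * s / (v + s))
            (p.1 - (((v : ℝ) / (v + s)) • π⁻¹.permMatrix ℝ).mulVec p.2) *
          gaussianPiPDF 0 s (p.2 - (π'.permMatrix ℝ).mulVec p.1) := by
      simp only [gaussianPiPDF_mul_gaussianLR_comp hv hs, gaussianPiPDF_mul_gaussianLR hs,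
        gaussianPiPDF_zero_sub, Matrix.smul_mulVec, Matrix.permMatrix_mulVec]
      rfl
    _ = _ := by
      rw [lintegral_sub_mulVec_mul_sub_mulVec hdet (by fun_prop) (by fun_prop),
        lintegral_gaussianPiPDF 0 (by positivity), lintegral_gaussianPiPDF 0 hs, one_mul, mul_one]

end LikelihoodRatio

section PermutedSignal

variable {ι : Type*} {v s : ℝ≥0}

theorem lintegral_gaussianLR_mul_gaussianLR_le [Fintype ι] (hv : v ≠ 0) (hs : s ≠ 0)
    (π π' : Equiv.Perm ι) :
    ∫⁻ p, gaussianLR v s (p.1 ∘ π) p.2 * gaussianLR v s (p.1 ∘ π') p.2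
        ∂(gaussianPi 0 v).prod (gaussianPi 0 (v + s)) ≤
      ENNReal.ofReal (Real.exp ((v : ℝ) / (v + s) * (Function.fixedPoints ⇑(π⁻¹ * π')).ncard
        + Fintype.card ι * (v ^ 2 / (2 * s * (v + s))))) := by
  classical
  have : (0 : ℝ) < v := by positivity
  have hs' : (0 : ℝ) < s := by positivity
  have ht : (v : ℝ) / (v + s) < 1 := (div_lt_one (by positivity)).2 (by linarith)
  have hdet := exp_neg_le_abs_det_one_sub_smul_permMatrix (π⁻¹ * π') (by positivity) ht
  have hpos := (Real.exp_pos _).trans_le hdet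
  rw [lintegral_gaussianLR_mul_gaussianLR hv hs π π' (abs_pos.1 hpos)]
  refine ENNReal.ofReal_le_ofReal ((inv_anti₀ (Real.exp_pos _) hdet).trans_eq ?_)
  have hrem : ((v : ℝ) / (v + s)) ^ 2 * (1 - (v : ℝ) / (v + s))⁻¹ / 2 =
      v ^ 2 / (2 * s * (v + s)) := by
    rw [one_sub_div (by positivity), add_sub_cancel_left]
    field_simp
  rw [← Real.exp_neg, hrem, neg_sub, sub_neg_eq_add, add_comm]

/-- The joint law of a signal `X ~ N(0, v I)` and its observation `X ∘ π θ + σ Z`, where `Z` is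
standard Gaussian and the latent parameter `θ ~ ρ` selects a permutation of the coordinates. -/
noncomputable def permJoint [Fintype ι] {Θ : Type*} [MeasurableSpace Θ] (v : ℝ≥0) (σ : ℝ)
    (ρ : Measure Θ) (π : Θ → Equiv.Perm ι) : Measure ((ι → ℝ) × (ι → ℝ)) :=
  ((gaussianPi 0 v).prod (ρ.prod (gaussianPi 0 1))).map
    fun ω => (ω.1, fun i => ω.1 (π ω.2.1 i) + σ * ω.2.2 i)

variable {Θ : Type*} [MeasurableSpace Θ] [Countable Θ] [MeasurableSingletonClass Θ]
  (ρ : Measure Θ) (π : Θ → Equiv.Perm ι)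

theorem measurable_comp_perm : Measurable fun p : (ι → ℝ) × Θ => p.1 ∘ π p.2 :=
  measurable_from_prod_countable_left fun θ => by dsimp only; fun_prop

variable [Fintype ι]

theorem measurable_gaussianLR_comp_perm (v s : ℝ≥0) :
    Measurable fun p : Θ × (ι → ℝ) × (ι → ℝ) => gaussianLR v s (p.2.1 ∘ π p.1) p.2.2 :=
  measurable_from_prod_countable_right fun θ => by dsimp only; fun_prop

theorem gaussianPi_map_add_noise (hs : s ≠ 0) {σ : ℝ} (hσ : σ ^ 2 = s) (m : ι → ℝ) :
    (gaussianPi 0 1).map (fun z i => m i + σ * z i) =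
      (gaussianPi 0 (v + s)).withDensity (gaussianLR v s m) := by
  have hvar : (.mk (σ ^ 2) (sq_nonneg σ) : ℝ≥0) * 1 = s := NNReal.eq (by simpa using hσ)
  rw [gaussianPi_map_add_const_mul, gaussianPi_withDensity_gaussianLR hs, hvar, smul_zero,
    add_zero]

theorem map_observation_eq_withDensity [SFinite ρ] (hs : s ≠ 0) {σ : ℝ} (hσ : σ ^ 2 = s)
    (x : ι → ℝ) :
    (ρ.prod (gaussianPi 0 1)).map (fun p i => x (π p.1 i) + σ * p.2 i) =
      (gaussianPi 0 (v + s)).withDensity fun y => ∫⁻ θ, gaussianLR v s (x ∘ π θ) y ∂ρ := by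
  have hobs : Measurable fun p : Θ × (ι → ℝ) => fun i => x (π p.1 i) + σ * p.2 i :=
    measurable_from_prod_countable_right fun θ => by dsimp only; fun_prop
  have hlr : Measurable fun p : Θ × (ι → ℝ) => gaussianLR v s (x ∘ π p.1) p.2 :=
    measurable_from_prod_countable_right fun θ => by dsimp only; fun_prop
  exact (map_prod_eq_withDensity_lintegral (ρ := ρ) (κ := gaussianPi 0 1) hobs hlr fun θ =>
    gaussianPi_map_add_noise (v := v) hs hσ (x ∘ π θ) :)

theorem permJoint_eq_withDensity [SFinite ρ] (hs : s ≠ 0) {σ : ℝ} (hσ : σ ^ 2 = s) :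
    permJoint v σ ρ π = ((gaussianPi 0 v).prod (gaussianPi 0 (v + s))).withDensity
      fun p => ∫⁻ θ, gaussianLR v s (p.1 ∘ π θ) p.2 ∂ρ := by
  have hsignal : Measurable fun ω : (ι → ℝ) × Θ × (ι → ℝ) => ω.1 ∘ π ω.2.1 :=
    (measurable_comp_perm π).comp (measurable_fst.prodMk measurable_snd.fst)
  have hobs : Measurable fun ω : (ι → ℝ) × Θ × (ι → ℝ) =>
      fun i => ω.1 (π ω.2.1 i) + σ * ω.2.2 i :=
    measurable_pi_lambda _ fun i => (measurable_pi_iff.1 hsignal i).add (by fun_prop)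
  exact map_prodMk_prod_eq_withDensity hobs
    (measurable_gaussianLR_comp_perm π v s).lintegral_prod_left'
    (map_observation_eq_withDensity ρ π hs hσ)

variable [IsProbabilityMeasure ρ]

theorem lintegral_lintegral_gaussianLR_right (hs : s ≠ 0) (x : ι → ℝ) :
    ∫⁻ y, ∫⁻ θ, gaussianLR v s (x ∘ π θ) y ∂ρ ∂gaussianPi 0 (v + s) = 1 := by
  have hlr : Measurable fun p : (ι → ℝ) × Θ => gaussianLR v s (x ∘ π p.2) p.1 :=
    measurable_from_prod_countable_left fun θ => by dsimp only; fun_prop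
  rw [lintegral_lintegral_swap hlr.aemeasurable]
  simp only [lintegral_gaussianLR_right hs, lintegral_const, measure_univ, mul_one]

theorem lintegral_lintegral_gaussianLR_left (hv : v ≠ 0) (hs : s ≠ 0) (y : ι → ℝ) :
    ∫⁻ x, ∫⁻ θ, gaussianLR v s (x ∘ π θ) y ∂ρ ∂gaussianPi 0 v = 1 := by
  have hlr : Measurable fun p : (ι → ℝ) × Θ => gaussianLR v s (p.1 ∘ π p.2) y :=
    measurable_from_prod_countable_left fun θ => by dsimp only; fun_prop
  rw [lintegral_lintegral_swap hlr.aemeasurable]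
  simp only [lintegral_gaussianLR_comp_left hv hs, lintegral_const, measure_univ, mul_one]

theorem mutualInfo_permJoint_nonneg (hv : v ≠ 0) {σ : ℝ} (hσ : σ ≠ 0) :
    0 ≤ mutualInfo (permJoint v σ ρ π) := by
  have hs : (.mk (σ ^ 2) (sq_nonneg σ) : ℝ≥0) ≠ 0 := by
    simpa [← NNReal.coe_ne_zero] using hσ
  rw [permJoint_eq_withDensity ρ π hs rfl]
  exact mutualInfo_withDensity_prod_nonneg
    (measurable_gaussianLR_comp_perm π _ _).lintegral_prod_left'
    (lintegral_lintegral_gaussianLR_right ρ π hs) (lintegral_lintegral_gaussianLR_left ρ π hv hs)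

theorem ofReal_exp_mutualInfo_permJoint_le (hv : v ≠ 0) (hs : s ≠ 0) {σ : ℝ} (hσ : σ ^ 2 = s) :
    ENNReal.ofReal (Real.exp (mutualInfo (permJoint v σ ρ π))) ≤
      ∫⁻ θ, ∫⁻ θ', ENNReal.ofReal (Real.exp
        ((v : ℝ) / (v + s) * (Function.fixedPoints ⇑((π θ)⁻¹ * π θ')).ncard
          + Fintype.card ι * (v ^ 2 / (2 * s * (v + s))))) ∂ρ ∂ρ := by
  have hlr := measurable_gaussianLR_comp_perm π v s
  rw [permJoint_eq_withDensity ρ π hs hσ]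
  refine (ofReal_exp_mutualInfo_withDensity_prod_le hlr.lintegral_prod_left'
    (lintegral_lintegral_gaussianLR_right ρ π hs)
    (lintegral_lintegral_gaussianLR_left ρ π hv hs)).trans ?_
  rw [lintegral_lintegral_mul_lintegral ρ _ hlr]
  exact lintegral_mono fun θ => lintegral_mono fun θ' =>
    lintegral_gaussianLR_mul_gaussianLR_le hv hs (π θ) (π θ')

end PermutedSignal

section CyclicShift

variable {L : ℕ}

theorem lintegral_unifFin (f : Fin L → ℝ≥0∞) :
    ∫⁻ l, f l ∂unifFin L = (L : ℝ≥0∞)⁻¹ * ∑ l, f l := by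
  rw [unifFin, lintegral_smul_measure, lintegral_count, tsum_fintype, smul_eq_mul]

variable [NeZero L]

instance : IsProbabilityMeasure (unifFin L) := by
  constructor
  simp [unifFin, ENNReal.inv_mul_cancel, NeZero.ne L]

theorem mraJoint1_eq_permJoint (σ : ℝ) :
    mraJoint1 L σ = permJoint 1 σ (unifFin L) Equiv.addRight :=
  rfl

theorem ncard_fixedPoints_addRight_inv_mul (l l' : Fin L) :
    (Function.fixedPoints ⇑((Equiv.addRight l)⁻¹ * Equiv.addRight l')).ncard =
      if l = l' then L else 0 := by
  split_ifs with h
  · rw [h, inv_mul_cancel, Equiv.Perm.coe_one, Function.fixedPoints_id, Set.ncard_univ,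
      Nat.card_fin]
  · refine (Set.ncard_eq_zero).2 (Set.eq_empty_of_forall_notMem fun j hj => h ?_)
    have hj' : (Equiv.addRight l)⁻¹ (Equiv.addRight l' j) = j := hj
    exact (add_left_cancel (Equiv.Perm.inv_eq_iff_eq.1 hj')).symm

theorem lintegral_unifFin_exp_ncard_fixedPoints_le {t : ℝ} (c : ℝ) (l : Fin L) :
    ∫⁻ l', ENNReal.ofReal (Real.exp (t *
        (Function.fixedPoints ⇑((Equiv.addRight l)⁻¹ * Equiv.addRight l')).ncard + c))
        ∂unifFin L ≤
      ENNReal.ofReal ((1 + (L : ℝ)⁻¹ * Real.exp (t * L)) * Real.exp c) := by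
  have hL : (0 : ℝ) < L := by exact_mod_cast NeZero.pos L
  have hterm (l' : Fin L) : Real.exp (t * (if l = l' then L else 0 : ℕ) + c) ≤
      ((if l = l' then Real.exp (t * L) else 0) + 1) * Real.exp c := by
    rw [Real.exp_add]
    gcongr
    split_ifs <;> simp
  simp only [ncard_fixedPoints_addRight_inv_mul]
  rw [lintegral_unifFin, ← ENNReal.ofReal_sum_of_nonneg fun _ _ => (Real.exp_pos _).le,
    ← ENNReal.ofReal_natCast, ← ENNReal.ofReal_inv_of_pos hL, ← ENNReal.ofReal_mul (by positivity)]
  refine ENNReal.ofReal_le_ofReal ?_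
  calc
    _ ≤ (L : ℝ)⁻¹ * ∑ l', ((if l = l' then Real.exp (t * L) else 0) + 1) * Real.exp c := by
      gcongr with l'
      exact hterm l'
    _ = _ := by
      rw [← Finset.sum_mul, Finset.sum_add_distrib, Finset.sum_ite_eq]
      simp only [Finset.mem_univ, if_true, Finset.sum_const, Finset.card_univ, Fintype.card_fin,
        nsmul_eq_mul, mul_one]
      field_simp
      ring

theorem mutualInfo_mraJoint1_nonneg {σ : ℝ} (hσ : σ ≠ 0) : 0 ≤ mutualInfo (mraJoint1 L σ) := by
  rw [mraJoint1_eq_permJoint]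
  exact mutualInfo_permJoint_nonneg (unifFin L) Equiv.addRight one_ne_zero hσ

theorem mutualInfo_mraJoint1_le {σ : ℝ} (hσ : σ ≠ 0) :
    mutualInfo (mraJoint1 L σ) ≤
      Real.log (1 + (L : ℝ)⁻¹ * Real.exp (L / (1 + σ ^ 2))) + L / (2 * σ ^ 2 * (1 + σ ^ 2)) := by
  let s : ℝ≥0 := .mk (σ ^ 2) (sq_nonneg σ)
  have hs : s ≠ 0 := by simpa [s, ← NNReal.coe_ne_zero] using hσ
  have hexp : ENNReal.ofReal (Real.exp (mutualInfo (mraJoint1 L σ))) ≤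
      ENNReal.ofReal ((1 + (L : ℝ)⁻¹ * Real.exp (L / (1 + σ ^ 2))) *
        Real.exp (L / (2 * σ ^ 2 * (1 + σ ^ 2)))) := by
    rw [mraJoint1_eq_permJoint]
    refine (ofReal_exp_mutualInfo_permJoint_le (unifFin L) Equiv.addRight one_ne_zero hs
      rfl).trans ?_
    refine (lintegral_mono fun l => lintegral_unifFin_exp_ncard_fixedPoints_le _ l).trans_eq ?_
    simp [s, div_eq_mul_inv, mul_comm]
  rw [ENNReal.ofReal_le_ofReal_iff (by positivity),
    ← Real.le_log_iff_exp_le (by positivity),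
    Real.log_mul (by positivity) (by positivity), Real.log_exp] at hexp
  exact hexp

end CyclicShift

section LowSNR

theorem mutualInfo_mraJoint1_le_log_add {L : ℕ} (hL : 0 < L) {σ : ℝ} (hσ : σ ≠ 0) :
    mutualInfo (mraJoint1 L σ) ≤
      Real.log (1 + (L : ℝ)⁻¹ * Real.exp (L / σ ^ 2)) + 1 / 2 * L / σ ^ 4 := by
  have : NeZero L := ⟨hL.ne'⟩
  have hvar : 0 < σ ^ 2 := by positivity
  refine (mutualInfo_mraJoint1_le hσ).trans (add_le_add ?_ ?_)
  · gcongr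
    exact le_add_of_nonneg_left zero_le_one
  · rw [one_div_mul_eq_div, div_div]
    refine div_le_div_of_nonneg_left (by positivity) (by positivity) ?_
    nlinarith

theorem sigmaAlpha_sq (L : ℕ) {α : ℝ} (hα : 0 ≤ α) :
    sigmaAlpha L α ^ 2 = L / (α * Real.log L) :=
  Real.sq_sqrt (by have := Real.log_natCast_nonneg L; positivity)

theorem sigmaAlpha_ne_zero {L : ℕ} (hL : 1 < L) {α : ℝ} (hα : 0 < α) : sigmaAlpha L α ≠ 0 := by
  have : 0 < Real.log (L : ℝ) := Real.log_pos (by exact_mod_cast hL)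
  exact (Real.sqrt_pos.2 (by positivity)).ne'

theorem mutualInfo_sigmaAlpha_nonneg {L : ℕ} (hL : 1 < L) {α : ℝ} (hα : 0 < α) :
    0 ≤ mutualInfo (mraJoint1 L (sigmaAlpha L α)) :=
  have : NeZero L := ⟨by lia⟩
  mutualInfo_mraJoint1_nonneg (sigmaAlpha_ne_zero hL hα)

theorem mutualInfo_sigmaAlpha_div_rpow_le {L : ℕ} (hL : 1 < L) {α : ℝ} (hα : 0 < α) :
    mutualInfo (mraJoint1 L (sigmaAlpha L α)) / (L : ℝ) ^ (α - 1) ≤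
      1 + α ^ 2 / 2 * (Real.log L ^ (2 : ℝ) / (L : ℝ) ^ α) := by
  have hL' : (0 : ℝ) < L := by exact_mod_cast (by lia : 0 < L)
  have hlog : 0 < Real.log (L : ℝ) := Real.log_pos (by exact_mod_cast hL)
  have hsq := sigmaAlpha_sq L hα.le
  have hpow : Real.exp (L / sigmaAlpha L α ^ 2) = (L : ℝ) ^ α := by
    rw [hsq, div_div_cancel₀ hL'.ne', mul_comm, ← Real.rpow_def_of_pos hL']
  rw [div_le_iff₀ (by positivity)]
  calc
    _ ≤ Real.log (1 + (L : ℝ)⁻¹ * Real.exp (L / sigmaAlpha L α ^ 2)) +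
          1 / 2 * L / sigmaAlpha L α ^ 4 :=
      mutualInfo_mraJoint1_le_log_add (by lia) (sigmaAlpha_ne_zero hL hα)
    _ ≤ (L : ℝ)⁻¹ * Real.exp (L / sigmaAlpha L α ^ 2) + 1 / 2 * L / sigmaAlpha L α ^ 4 := by
      gcongr
      linarith [Real.log_le_sub_one_of_pos
        (by positivity : 0 < 1 + (L : ℝ)⁻¹ * Real.exp (L / sigmaAlpha L α ^ 2))]
    _ = _ := by
      rw [hpow, show 4 = 2 * 2 from rfl, pow_mul, hsq, Real.rpow_sub_one hL'.ne', Real.rpow_two]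
      field_simp

theorem tendsto_one_add_mul_log_sq_div_rpow {α : ℝ} (hα : 0 < α) (c : ℝ) :
    Tendsto (fun L : ℕ => 1 + c * (Real.log L ^ (2 : ℝ) / (L : ℝ) ^ α)) atTop (nhds 1) := by
  have hlog := (isLittleO_log_rpow_rpow_atTop 2 hα).tendsto_div_nhds_zero
  simpa using ((hlog.comp tendsto_natCast_atTop_atTop).const_mul c).const_add 1

theorem limsup_mutualInfo_sigmaAlpha_div_rpow_le {α : ℝ} (hα : 0 < α) :
    limsup (fun L : ℕ => mutualInfo (mraJoint1 L (sigmaAlpha L α)) / (L : ℝ) ^ (α - 1)) atTop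
      ≤ 1 := by
  have hbound := tendsto_one_add_mul_log_sq_div_rpow hα (α ^ 2 / 2)
  have hnonneg : ∀ᶠ L : ℕ in atTop,
      0 ≤ mutualInfo (mraJoint1 L (sigmaAlpha L α)) / (L : ℝ) ^ (α - 1) := by
    filter_upwards [eventually_gt_atTop 1] with L hL
    have := mutualInfo_sigmaAlpha_nonneg hL hα
    positivity
  refine (limsup_le_limsup ?_ ?_ hbound.isBoundedUnder_le).trans_eq hbound.limsup_eq
  · filter_upwards [eventually_gt_atTop 1] with L hL
    exact mutualInfo_sigmaAlpha_div_rpow_le hL hα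
  · exact (isBoundedUnder_of_eventually_ge hnonneg).isCoboundedUnder_le

theorem tendsto_mutualInfo_sigmaAlpha {α : ℝ} (hα : 0 < α) (hα1 : α < 1) :
    Tendsto (fun L : ℕ => mutualInfo (mraJoint1 L (sigmaAlpha L α))) atTop (nhds 0) := by
  have hpow : Tendsto (fun L : ℕ => (L : ℝ) ^ (α - 1)) atTop (nhds 0) := by
    simpa only [neg_sub, Function.comp_def] using
      (tendsto_rpow_neg_atTop (sub_pos.2 hα1)).comp tendsto_natCast_atTop_atTop
  have hbound := (tendsto_one_add_mul_log_sq_div_rpow hα (α ^ 2 / 2)).mul hpow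
  rw [mul_zero] at hbound
  refine squeeze_zero' ?_ ?_ hbound <;> filter_upwards [eventually_gt_atTop 1] with L hL
  · exact mutualInfo_sigmaAlpha_nonneg hL hα
  · have : (0 : ℝ) < L := by exact_mod_cast (by lia : 0 < L)
    exact (div_le_iff₀ (by positivity)).1 (mutualInfo_sigmaAlpha_div_rpow_le hL hα)

end LowSNR

theorem mutual_info_very_low_snr_general :
    (∀ L : ℕ, 0 < L → ∀ σ : ℝ, σ ≠ 0 →
      mutualInfo (mraJoint1 L σ) ≤
        Real.log (1 + (L : ℝ)⁻¹ * Real.exp ((L : ℝ) / σ ^ 2)) + 1 / 2 * L / σ ^ 4) ∧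
    ∀ α : ℝ, 0 < α →
      limsup (fun L : ℕ =>
          mutualInfo (mraJoint1 L (sigmaAlpha L α)) / (L : ℝ) ^ (α - 1)) atTop ≤ 1 ∧
      (α < 1 →
        Tendsto (fun L : ℕ => mutualInfo (mraJoint1 L (sigmaAlpha L α))) atTop (nhds 0)) :=
  ⟨fun _ hL _ hσ => mutualInfo_mraJoint1_le_log_add hL hσ, fun _ hα =>
    ⟨limsup_mutualInfo_sigmaAlpha_div_rpow_le hα, tendsto_mutualInfo_sigmaAlpha hα⟩⟩

/-- mutual information upper bound at very low SNR. There is `C > 0` such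
that for all `L ≥ 2` and `σ² > 2`, `I(X;Y) ≤ log(1 + L⁻¹·e^{L/σ²}) + C·L/σ⁴`.
In particular, with `σ² = L/(α log L)` and `0 < α < 1` fixed,
`limsup_{L→∞} I(X;Y)/L^{α−1} ≤ 1`, so `I(X;Y) → 0`. -/
theorem mutual_info_very_low_snr :
    (∃ C : ℝ, 0 < C ∧ ∀ L : ℕ, 2 ≤ L → ∀ σ : ℝ, 2 < σ ^ 2 →
      mutualInfo (mraJoint1 L σ) ≤
        Real.log (1 + (L : ℝ)⁻¹ * Real.exp ((L : ℝ) / σ ^ 2)) + C * L / σ ^ 4) ∧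
    ∀ α : ℝ, 0 < α → α < 1 →
      Filter.limsup (fun L : ℕ =>
          mutualInfo (mraJoint1 L (sigmaAlpha L α)) / (L : ℝ) ^ (α - 1)) atTop ≤ 1 ∧
      Tendsto (fun L : ℕ => mutualInfo (mraJoint1 L (sigmaAlpha L α))) atTop (nhds 0) := by
  obtain ⟨hbound, hasymp⟩ := mutual_info_very_low_snr_general
  exact ⟨⟨1 / 2, by norm_num, fun L hL σ hσ =>
    hbound L (by lia) σ (by rintro rfl; norm_num at hσ)⟩,
    fun α hα hα1 => (hasymp α hα).imp_right (· hα1)⟩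

end MRAformal
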